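/- arXiv:2406.01351 — 2 statements merged into one kernel-verified Lean document; each statement's English description precedes it below -/
import Mathlib

section
/- Let Ω ⊆ ℝ² be open and simply connected (as a topological subspace), let λ ∈ ℝ, let ψ : ℝ² → ℝ be smooth on Ω with Δ(Δψ) + λΔψ = 0 on Ω, and set u = (∂₂ψ, −∂₁ψ). Then there exists a function p : ℝ² → ℝ, smooth on Ω, such that Δu + λu = ∇p on Ω (componentwise) and Δp = 0 on Ω. -/
open MeasureTheory

/-- First partial derivative (with respect to the first coordinate of `ℝ × ℝ`). -/
noncomputable def pd1 (f : ℝ × ℝ → ℝ) : ℝ × ℝ → ℝ := fun x => fderiv ℝ f x (1, 0)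

/-- Second partial derivative (with respect to the second coordinate of `ℝ × ℝ`). -/
noncomputable def pd2 (f : ℝ × ℝ → ℝ) : ℝ × ℝ → ℝ := fun x => fderiv ℝ f x (0, 1)

/-- The Laplacian on `ℝ × ℝ`. -/
noncomputable def lap (f : ℝ × ℝ → ℝ) : ℝ × ℝ → ℝ := fun x => pd1 (pd1 f) x + pd2 (pd2 f) x

/-!
The function `w = Δψ + λψ` is harmonic on `Ω`, because `Δw = Δ(Δψ) + λΔψ = 0`, and partial
derivatives commute, so `Δu + λu = (∂₂w, -∂₁w)`. Hence `∇p = Δu + λu` are the Cauchy–Riemann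
equations for `p + iw`, and the 1-form `∂₂w dx₁ - ∂₁w dx₂` to be integrated is closed precisely
because `Δw = 0`.

A closed 1-form has primitives on balls by the Poincaré lemma, and any two of them differ by a
locally constant function where both are defined. The germs of primitives therefore form a covering
space of `Ω`; since `Ω` is simply connected this covering has a continuous section, which is a
global primitive.
-/

open Set Filter Topology

section LocallyConstantOn

variable {X Y : Type*} [TopologicalSpace X]

/-- Local constancy of a function on a set, without reference to a topology on the codomain. -/
def IsLocallyConstantOn (f : X → Y) (s : Set X) : Prop :=
  ∀ x ∈ s, ∀ᶠ y in 𝓝[s] x, f y = f x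

theorem isLocallyConstantOn_iff_continuousOn [TopologicalSpace Y] [DiscreteTopology Y]
    {f : X → Y} {s : Set X} : IsLocallyConstantOn f s ↔ ContinuousOn f s := by
  simp only [IsLocallyConstantOn, ContinuousOn, ContinuousWithinAt, nhds_discrete, tendsto_pure]

theorem IsLocallyConstantOn.comp_continuous {Z : Type*} [TopologicalSpace Z] {f : X → Y}
    {s : Set X} (hf : IsLocallyConstantOn f s) {g : Z → X} (hg : Continuous g) :
    IsLocallyConstantOn (f ∘ g) (g ⁻¹' s) := fun z hz =>
  (hg.continuousWithinAt.tendsto_nhdsWithin (mapsTo_preimage g s)).eventually (hf (g z) hz)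

end LocallyConstantOn

section Gluing

variable {X ι A : Type*} [TopologicalSpace X]

theorem exists_continuousMap_section_of_isCoveringMap {E : Type*} [TopologicalSpace E] [Nonempty E]
    [SimplyConnectedSpace X] [LocallyPathConnectedSpace X] {π : E → X} (hπ : IsCoveringMap π) :
    ∃ s : C(X, E), ∀ x, π (s x) = x := by
  obtain ⟨e₀⟩ := ‹Nonempty E›
  obtain ⟨s, ⟨-, hs⟩, -⟩ := hπ.existsUnique_continuousMap_lifts (ContinuousMap.id X) (π e₀) e₀ rfl
  exact ⟨s, congrFun hs⟩

/-- The covering space of germs of functions that differ from the local data `f i` by a locally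
constant function. In the chart `i`, the coordinate `v` over `x` stands for the germ at `x` of
`v + f i`. -/
def germBundleCore [TopologicalSpace A] [DiscreteTopology A] [AddGroup A] (U : ι → Set X)
    (hU : ∀ i, IsOpen (U i)) (index : X → ι) (hindex : ∀ x, x ∈ U (index x)) (f : ι → X → A)
    (hf : ∀ i j, ContinuousOn (fun x => f i x - f j x) (U i ∩ U j)) : FiberBundleCore ι X A where
  baseSet := U
  isOpen_baseSet := hU
  indexAt := index
  mem_baseSet_at := hindex
  coordChange i j x v := v + (f i x - f j x)
  coordChange_self i x _ v := by rw [sub_self, add_zero]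
  continuousOn_coordChange i j :=
    continuousOn_snd.add ((hf i j).comp continuousOn_fst fun _ hq => hq.1)
  coordChange_comp i j k x _ v := by rw [add_assoc, sub_add_sub_cancel]

theorem exists_isLocallyConstantOn_sub [SimplyConnectedSpace X] [LocallyPathConnectedSpace X]
    [AddGroup A] {U : ι → Set X} (hU : ∀ i, IsOpen (U i)) (hcover : ∀ x, ∃ i, x ∈ U i)
    {f : ι → X → A} (hf : ∀ i j, IsLocallyConstantOn (fun x => f i x - f j x) (U i ∩ U j)) :
    ∃ p : X → A, ∀ i, IsLocallyConstantOn (fun x => p x - f i x) (U i) := by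
  let _ : TopologicalSpace A := ⊥
  have : DiscreteTopology A := ⟨rfl⟩
  choose index hindex using hcover
  let Z := germBundleCore U hU index hindex f fun i j =>
    isLocallyConstantOn_iff_continuousOn.mp (hf i j)
  have hcovering : IsCoveringMap (Bundle.TotalSpace.proj : Z.TotalSpace → X) :=
    FiberBundle.isCoveringMap
  have : Nonempty Z.TotalSpace := ⟨⟨Classical.arbitrary X, (0 : A)⟩⟩
  obtain ⟨s, hs⟩ := exists_continuousMap_section_of_isCoveringMap hcovering
  -- the value at the base point of the function whose germ is `e`
  let value (e : Z.TotalSpace) : A := (show A from e.2) + f (index e.1) e.1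
  have value_sub (i : ι) (e : Z.TotalSpace) : value e - f i e.1 = (Z.localTriv i e).2 :=
    add_sub_assoc _ _ _
  refine ⟨fun x => value (s x), fun i => isLocallyConstantOn_iff_continuousOn.mpr ?_⟩
  have hcoord : ContinuousOn (fun x => (Z.localTriv i (s x)).2) (U i) := by
    refine continuous_snd.comp_continuousOn
      ((Z.localTriv i).continuousOn.comp s.continuous.continuousOn fun x hx => ?_)
    rwa [Z.mem_localTriv_source, hs]
  refine hcoord.congr fun x _ => ?_
  change value (s x) - f i x = (Z.localTriv i (s x)).2
  rw [← value_sub i (s x), hs]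

end Gluing

section Primitive

variable {E F : Type*} [NormedAddCommGroup E] [NormedSpace ℝ E] [NormedAddCommGroup F]
  [NormedSpace ℝ F] {ω : E → E →L[ℝ] F}

theorem isLocallyConstantOn_sub_of_hasFDerivAt {s : Set E} (hs : IsOpen s) {f g : E → F}
    (hf : ∀ x ∈ s, HasFDerivAt f (ω x) x) (hg : ∀ x ∈ s, HasFDerivAt g (ω x) x) :
    IsLocallyConstantOn (fun x => f x - g x) s := by
  have hfg : ∀ x ∈ s, HasFDerivAt (fun y => f y - g y) (0 : E →L[ℝ] F) x := fun x hx => by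
    simpa only [sub_self] using (hf x hx).fun_sub (hg x hx)
  intro x hx
  have hopen := hs.isOpen_inter_preimage_of_fderiv_eq_zero
    (fun y hy => (hfg y hy).differentiableAt.differentiableWithinAt)
    (fun y hy => (hfg y hy).fderiv) {f x - g x}
  exact eventually_nhdsWithin_of_eventually_nhds
    ((hopen.eventually_mem ⟨hx, rfl⟩).mono fun y hy => hy.2)

theorem exists_hasFDerivAt_of_fderiv_symmetric [CompleteSpace F] {Ω : Set E} (hΩ : IsOpen Ω)
    [SimplyConnectedSpace Ω] (hω : DifferentiableOn ℝ ω Ω)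
    (hsymm : ∀ a ∈ Ω, ∀ x y, fderiv ℝ ω a x y = fderiv ℝ ω a y x) :
    ∃ p : E → F, ∀ a ∈ Ω, HasFDerivAt p (ω a) a := by
  have : LocallyPathConnectedSpace Ω := hΩ.locallyPathConnectedSpace
  have hlocal (i : Ω) : ∃ V : Set E, IsOpen V ∧ (i : E) ∈ V ∧
      ∃ f : E → F, ∀ a ∈ V, HasFDerivAt f (ω a) a := by
    obtain ⟨r, hr, hsub⟩ := Metric.isOpen_iff.mp hΩ i i.2
    exact ⟨_, Metric.isOpen_ball, Metric.mem_ball_self hr,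
      (convex_ball _ _).exists_forall_hasFDerivAt_of_fderiv_symmetric Metric.isOpen_ball
        (hω.mono hsub) fun a ha => hsymm a (hsub ha)⟩
  choose V hVopen hmem f hf using hlocal
  obtain ⟨p, hp⟩ := exists_isLocallyConstantOn_sub
    (fun i => (hVopen i).preimage continuous_subtype_val) (fun i : Ω => ⟨i, hmem i⟩)
    (f := fun i x => f i x) fun i j =>
      (isLocallyConstantOn_sub_of_hasFDerivAt ((hVopen i).inter (hVopen j))
        (fun a ha => hf i a ha.1) fun a ha => hf j a ha.2).comp_continuous continuous_subtype_val
  refine ⟨Function.extend Subtype.val p 0, fun a ha => ?_⟩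
  lift a to Ω using ha
  have hconst : ∀ᶠ x : Ω in 𝓝 a, p x = f a x + (p a - f a a) := by
    have h := hp a a (hmem a)
    rw [((hVopen a).preimage continuous_subtype_val).nhdsWithin_eq (hmem a)] at h
    exact h.mono fun x hx => sub_eq_iff_eq_add'.mp hx
  refine ((hf a a (hmem a)).add_const (p a - f a a)).congr_of_eventuallyEq ?_
  rw [EventuallyEq, ← hΩ.isOpenEmbedding_subtypeVal.map_nhds_eq a, eventually_map]
  simpa only [Subtype.val_injective.extend_apply] using hconst

theorem contDiffOn_of_hasFDerivAt {n : ℕ∞} {Ω : Set E} (hΩ : IsOpen Ω) (hω : ContDiffOn ℝ n ω Ω)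
    {p : E → F} (hp : ∀ x ∈ Ω, HasFDerivAt p (ω x) x) : ContDiffOn ℝ (n + 1) p Ω :=
  (contDiffOn_succ_iff_fderiv_of_isOpen hΩ).mpr
    ⟨fun x hx => (hp x hx).differentiableAt.differentiableWithinAt, by simp,
      hω.congr fun x hx => (hp x hx).fderiv⟩

end Primitive

section DirectionalDerivative

variable {E F : Type*} [NormedAddCommGroup E] [NormedSpace ℝ E] [NormedAddCommGroup F]
  [NormedSpace ℝ F] {f g : E → F} {x : E}

/-- The derivative in the direction `v`, as an operator on functions; `pd1` and `pd2` are
definitionally `dirDeriv (1, 0)` and `dirDeriv (0, 1)`. -/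
noncomputable def dirDeriv (v : E) (f : E → F) : E → F := fun x => fderiv ℝ f x v

theorem contDiffAt_dirDeriv {m n : WithTop ℕ∞} (hf : ContDiffAt ℝ n f x) (hmn : m + 1 ≤ n)
    (v : E) : ContDiffAt ℝ m (dirDeriv v f) x :=
  (hf.fderiv_right hmn).clm_apply contDiffAt_const

theorem dirDeriv_congr (h : f =ᶠ[𝓝 x] g) (v : E) : dirDeriv v f x = dirDeriv v g x := by
  rw [dirDeriv, dirDeriv, h.fderiv_eq]

theorem dirDeriv_add (hf : DifferentiableAt ℝ f x) (hg : DifferentiableAt ℝ g x) (v : E) :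
    dirDeriv v (f + g) x = dirDeriv v f x + dirDeriv v g x := by
  rw [dirDeriv, fderiv_add hf hg]
  rfl

theorem dirDeriv_neg (v : E) (f : E → F) : dirDeriv v (-f) = -dirDeriv v f := by
  ext x
  rw [dirDeriv, fderiv_neg]
  rfl

theorem dirDeriv_const_smul (v : E) (c : ℝ) (f : E → F) :
    dirDeriv v (c • f) = c • dirDeriv v f := by
  ext x
  rw [dirDeriv, fderiv_const_smul_field]
  rfl

theorem dirDeriv_dirDeriv_apply (hf : ContDiffAt ℝ 2 f x) (v w : E) :
    dirDeriv v (dirDeriv w f) x = fderiv ℝ (fderiv ℝ f) x v w := by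
  have hd : DifferentiableAt ℝ (fderiv ℝ f) x :=
    (hf.fderiv_right (m := 1) (by norm_num)).differentiableAt one_ne_zero
  change fderiv ℝ (fun y => fderiv ℝ f y w) x v = _
  simp [fderiv_clm_apply hd (differentiableAt_const w)]

theorem dirDeriv_comm (hf : ContDiffAt ℝ 2 f x) (v w : E) :
    dirDeriv v (dirDeriv w f) x = dirDeriv w (dirDeriv v f) x := by
  rw [dirDeriv_dirDeriv_apply hf, dirDeriv_dirDeriv_apply hf]
  exact hf.isSymmSndFDerivAt (by simp) v w

theorem dirDeriv_dirDeriv_comm (hf : ContDiffAt ℝ 3 f x) (v w : E) :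
    dirDeriv w (dirDeriv w (dirDeriv v f)) x = dirDeriv v (dirDeriv w (dirDeriv w f)) x := by
  have hcomm : dirDeriv w (dirDeriv v f) =ᶠ[𝓝 x] dirDeriv v (dirDeriv w f) :=
    (hf.eventually (by simp)).mono fun y hy => dirDeriv_comm (hy.of_le (by norm_num)) w v
  rw [dirDeriv_congr hcomm]
  exact dirDeriv_comm (contDiffAt_dirDeriv hf (by norm_num) w) w v

end DirectionalDerivative

section Laplacian

variable {f g : ℝ × ℝ → ℝ} {x : ℝ × ℝ}

theorem contDiffAt_lap {m n : WithTop ℕ∞} (hf : ContDiffAt ℝ n f x) (hmn : m + 2 ≤ n) :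
    ContDiffAt ℝ m (lap f) x := by
  rw [← one_add_one_eq_two, ← add_assoc] at hmn
  have h (v : ℝ × ℝ) : ContDiffAt ℝ m (dirDeriv v (dirDeriv v f)) x :=
    contDiffAt_dirDeriv (contDiffAt_dirDeriv hf hmn v) le_rfl v
  exact (h (1, 0)).add (h (0, 1))

theorem lap_add (hf : ContDiffAt ℝ 2 f x) (hg : ContDiffAt ℝ 2 g x) :
    lap (f + g) x = lap f x + lap g x := by
  have h (v : ℝ × ℝ) : dirDeriv v (dirDeriv v (f + g)) x
      = dirDeriv v (dirDeriv v f) x + dirDeriv v (dirDeriv v g) x := by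
    have hadd : dirDeriv v (f + g) =ᶠ[𝓝 x] dirDeriv v f + dirDeriv v g := by
      filter_upwards [hf.eventually (by simp), hg.eventually (by simp)] with y hfy hgy
      exact dirDeriv_add (hfy.differentiableAt two_ne_zero) (hgy.differentiableAt two_ne_zero) v
    rw [dirDeriv_congr hadd]
    exact dirDeriv_add
      ((contDiffAt_dirDeriv (m := 1) hf (by norm_num) v).differentiableAt one_ne_zero)
      ((contDiffAt_dirDeriv (m := 1) hg (by norm_num) v).differentiableAt one_ne_zero) v
  exact (congrArg₂ (· + ·) (h (1, 0)) (h (0, 1))).trans (add_add_add_comm _ _ _ _)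

theorem lap_neg (f : ℝ × ℝ → ℝ) : lap (-f) = -lap f := by
  have h (v : ℝ × ℝ) : dirDeriv v (dirDeriv v (-f)) = -dirDeriv v (dirDeriv v f) := by
    rw [dirDeriv_neg, dirDeriv_neg]
  exact (congrArg₂ (· + ·) (h (1, 0)) (h (0, 1))).trans (neg_add _ _).symm

theorem lap_const_smul (c : ℝ) (f : ℝ × ℝ → ℝ) : lap (c • f) = c • lap f := by
  have h (v : ℝ × ℝ) : dirDeriv v (dirDeriv v (c • f)) = c • dirDeriv v (dirDeriv v f) := by
    rw [dirDeriv_const_smul, dirDeriv_const_smul]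
  exact (congrArg₂ (· + ·) (h (1, 0)) (h (0, 1))).trans (smul_add _ _ _).symm

theorem lap_dirDeriv (hf : ContDiffAt ℝ 3 f x) (v : ℝ × ℝ) :
    lap (dirDeriv v f) x = dirDeriv v (lap f) x := by
  have hdiff (w : ℝ × ℝ) : DifferentiableAt ℝ (dirDeriv w (dirDeriv w f)) x :=
    (contDiffAt_dirDeriv (m := 1) (contDiffAt_dirDeriv (m := 2) hf (by norm_num) w)
      (by norm_num) w).differentiableAt one_ne_zero
  exact (congrArg₂ (· + ·) (dirDeriv_dirDeriv_comm hf v (1, 0))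
    (dirDeriv_dirDeriv_comm hf v (0, 1))).trans (dirDeriv_add (hdiff _) (hdiff _) v).symm

theorem dirDeriv_lap_add_const_smul (hf : ContDiffAt ℝ 3 f x) (c : ℝ) (v : ℝ × ℝ) :
    dirDeriv v (lap f + c • f) x = lap (dirDeriv v f) x + c * dirDeriv v f x := by
  have hfx : DifferentiableAt ℝ f x := hf.differentiableAt three_ne_zero
  have hlap : DifferentiableAt ℝ (lap f) x :=
    (contDiffAt_lap (m := 1) hf (by norm_num)).differentiableAt one_ne_zero
  rw [dirDeriv_add hlap (hfx.const_smul c), dirDeriv_const_smul, lap_dirDeriv hf]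
  rfl

theorem lap_lap_add_const_smul (hf : ContDiffAt ℝ 4 f x) (c : ℝ) :
    lap (lap f + c • f) x = lap (lap f) x + c * lap f x := by
  have hcf : ContDiffAt ℝ 2 (c • f) x := (hf.of_le (by norm_num)).const_smul c
  rw [lap_add (contDiffAt_lap hf (by norm_num)) hcf, lap_const_smul]
  rfl

end Laplacian

section HarmonicConjugate

variable {Ω : Set (ℝ × ℝ)}

/-- The 1-form `a dx₁ + b dx₂` on the plane. -/
noncomputable def oneForm (a b : ℝ × ℝ → ℝ) (x : ℝ × ℝ) : ℝ × ℝ →L[ℝ] ℝ :=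
  a x • ContinuousLinearMap.fst ℝ ℝ ℝ + b x • ContinuousLinearMap.snd ℝ ℝ ℝ

theorem fderiv_oneForm_symm {a b : ℝ × ℝ → ℝ} {x : ℝ × ℝ} (ha : DifferentiableAt ℝ a x)
    (hb : DifferentiableAt ℝ b x) (hcurl : pd2 a x = pd1 b x) (v w : ℝ × ℝ) :
    fderiv ℝ (oneForm a b) x v w = fderiv ℝ (oneForm a b) x w v := by
  have hderiv : HasFDerivAt (oneForm a b) _ x :=
    (ha.hasFDerivAt.smul_const (ContinuousLinearMap.fst ℝ ℝ ℝ)).fun_add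
      (hb.hasFDerivAt.smul_const (ContinuousLinearMap.snd ℝ ℝ ℝ))
  have hbasis (L : ℝ × ℝ →L[ℝ] ℝ) (z : ℝ × ℝ) : L z = z.1 * L (1, 0) + z.2 * L (0, 1) := by
    rw [← smul_eq_mul, ← smul_eq_mul, ← map_smul, ← map_smul, ← map_add]
    simp
  have hcurl' : fderiv ℝ a x (0, 1) = fderiv ℝ b x (1, 0) := hcurl
  rw [hderiv.fderiv]
  simp only [add_apply, ContinuousLinearMap.smulRight_apply, smul_apply,
    ContinuousLinearMap.coe_fst', ContinuousLinearMap.coe_snd', smul_eq_mul,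
    hbasis (fderiv ℝ a x) v, hbasis (fderiv ℝ a x) w, hbasis (fderiv ℝ b x) v,
    hbasis (fderiv ℝ b x) w]
  linear_combination (v.2 * w.1 - v.1 * w.2) * hcurl'

theorem exists_hasFDerivAt_oneForm [SimplyConnectedSpace Ω] (hΩ : IsOpen Ω) {a b : ℝ × ℝ → ℝ}
    (ha : DifferentiableOn ℝ a Ω) (hb : DifferentiableOn ℝ b Ω)
    (hcurl : ∀ x ∈ Ω, pd2 a x = pd1 b x) :
    ∃ p : ℝ × ℝ → ℝ, ∀ x ∈ Ω, HasFDerivAt p (oneForm a b x) x :=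
  exists_hasFDerivAt_of_fderiv_symmetric hΩ ((ha.smul_const _).fun_add (hb.smul_const _))
    fun _ hx => fderiv_oneForm_symm (ha.differentiableAt (hΩ.mem_nhds hx))
      (hb.differentiableAt (hΩ.mem_nhds hx)) (hcurl _ hx)

/-- The Cauchy–Riemann equations for `p + i q` on `Ω`. -/
def CauchyRiemannOn (p q : ℝ × ℝ → ℝ) (Ω : Set (ℝ × ℝ)) : Prop :=
  ∀ x ∈ Ω, pd1 p x = pd2 q x ∧ pd2 p x = -pd1 q x

theorem CauchyRiemannOn.lap_eq_zero {p q : ℝ × ℝ → ℝ} (hpq : CauchyRiemannOn p q Ω)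
    (hΩ : IsOpen Ω) {x : ℝ × ℝ} (hx : x ∈ Ω) (hq : ContDiffAt ℝ 2 q x) : lap p x = 0 := by
  have h1 : pd1 p =ᶠ[𝓝 x] pd2 q := (hΩ.eventually_mem hx).mono fun y hy => (hpq y hy).1
  have h2 : pd2 p =ᶠ[𝓝 x] -pd1 q := (hΩ.eventually_mem hx).mono fun y hy => (hpq y hy).2
  calc lap p x
      = dirDeriv (1, 0) (pd2 q) x + dirDeriv (0, 1) (-pd1 q) x :=
        congrArg₂ (· + ·) (dirDeriv_congr h1 (1, 0)) (dirDeriv_congr h2 (0, 1))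
    _ = dirDeriv (1, 0) (dirDeriv (0, 1) q) x - dirDeriv (0, 1) (dirDeriv (1, 0) q) x := by
        rw [dirDeriv_neg, Pi.neg_apply, ← sub_eq_add_neg]
        rfl
    _ = 0 := sub_eq_zero.mpr (dirDeriv_comm hq _ _)

theorem exists_cauchyRiemannOn [SimplyConnectedSpace Ω] (hΩ : IsOpen Ω) {n : ℕ∞}
    {q : ℝ × ℝ → ℝ} (hq : ContDiffOn ℝ (n + 2) q Ω) (hharm : ∀ x ∈ Ω, lap q x = 0) :
    ∃ p : ℝ × ℝ → ℝ, ContDiffOn ℝ (n + 2) p Ω ∧ CauchyRiemannOn p q Ω := by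
  rw [← one_add_one_eq_two, ← add_assoc] at hq ⊢
  have hdir (v : ℝ × ℝ) : ContDiffOn ℝ (n + 1) (dirDeriv v q) Ω := fun x hx =>
    (contDiffAt_dirDeriv (hq.contDiffAt (hΩ.mem_nhds hx)) le_rfl v).contDiffWithinAt
  have ha : ContDiffOn ℝ (n + 1) (pd2 q) Ω := hdir (0, 1)
  have hb : ContDiffOn ℝ (n + 1) (-pd1 q) Ω := (hdir (1, 0)).neg
  have hcurl : ∀ x ∈ Ω, pd2 (pd2 q) x = pd1 (-pd1 q) x := fun x hx => by
    have hneg : pd1 (-pd1 q) = -pd1 (pd1 q) := dirDeriv_neg _ _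
    rw [hneg]
    exact eq_neg_of_add_eq_zero_right (hharm x hx)
  obtain ⟨p, hp⟩ := exists_hasFDerivAt_oneForm hΩ (ha.differentiableOn (by simp))
    (hb.differentiableOn (by simp)) hcurl
  have hform : ContDiffOn ℝ (n + 1) (oneForm (pd2 q) (-pd1 q)) Ω :=
    (ha.smul contDiffOn_const).add (hb.smul contDiffOn_const)
  refine ⟨p, contDiffOn_of_hasFDerivAt (n := n + 1) hΩ hform hp, fun x hx => ⟨?_, ?_⟩⟩
  · rw [pd1, (hp x hx).fderiv]
    simp [oneForm]
  · rw [pd2, (hp x hx).fderiv]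
    simp [oneForm]

end HarmonicConjugate

theorem stmt7_general (Ω : Set (ℝ × ℝ)) (hΩ : IsOpen Ω) (hsc : SimplyConnectedSpace Ω) (lam : ℝ)
    (n : ℕ∞) (ψ : ℝ × ℝ → ℝ) (hψ : ContDiffOn ℝ (n + 4) ψ Ω)
    (hbuck : ∀ x ∈ Ω, lap (lap ψ) x + lam * lap ψ x = 0)
    (u : ℝ × ℝ → ℝ × ℝ) (hu : u = fun x => (pd2 ψ x, -pd1 ψ x)) :
    ∃ p : ℝ × ℝ → ℝ, ContDiffOn ℝ (n + 2) p Ω ∧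
      (∀ x ∈ Ω,
        lap (fun y => (u y).1) x + lam * (u x).1 = pd1 p x ∧
        lap (fun y => (u y).2) x + lam * (u x).2 = pd2 p x) ∧
      ∀ x ∈ Ω, lap p x = 0 := by
  subst hu
  have hψn : ∀ x ∈ Ω, ContDiffAt ℝ (n + 4) ψ x := fun x hx => hψ.contDiffAt (hΩ.mem_nhds hx)
  have hψ4 : ∀ x ∈ Ω, ContDiffAt ℝ 4 ψ x := fun x hx => (hψn x hx).of_le le_add_self
  have hw : ∀ x ∈ Ω, ContDiffAt ℝ (n + 2) (lap ψ + lam • ψ) x := fun x hx =>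
    (contDiffAt_lap (hψn x hx) (by rw [add_assoc, two_add_two_eq_four])).add
      (((hψn x hx).of_le (by gcongr; norm_num)).const_smul lam)
  have hharm : ∀ x ∈ Ω, lap (lap ψ + lam • ψ) x = 0 := fun x hx =>
    (lap_lap_add_const_smul (hψ4 x hx) lam).trans (hbuck x hx)
  obtain ⟨p, hp, hCR⟩ :=
    exists_cauchyRiemannOn hΩ (fun x hx => (hw x hx).contDiffWithinAt) hharm
  refine ⟨p, hp, fun x hx => ?_, fun x hx => hCR.lap_eq_zero hΩ hx ((hw x hx).of_le le_add_self)⟩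
  have hcomm (v : ℝ × ℝ) :=
    dirDeriv_lap_add_const_smul ((hψ4 x hx).of_le (by norm_num)) lam v
  have hneg : lap (fun y => -pd1 ψ y) x = -lap (pd1 ψ) x := congrFun (lap_neg (pd1 ψ)) x
  refine ⟨(hcomm (0, 1)).symm.trans (hCR x hx).1.symm, ?_⟩
  rw [(hCR x hx).2, hneg, mul_neg, ← neg_add]
  exact congrArg Neg.neg (hcomm (1, 0)).symm

theorem stmt7 (Ω : Set (ℝ × ℝ)) (hΩ : IsOpen Ω) (hsc : SimplyConnectedSpace Ω) (lam : ℝ)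
    (ψ : ℝ × ℝ → ℝ) (hψ : ContDiffOn ℝ (⊤ : ℕ∞) ψ Ω)
    (hbuck : ∀ x ∈ Ω, lap (lap ψ) x + lam * lap ψ x = 0)
    (u : ℝ × ℝ → ℝ × ℝ) (hu : u = fun x => (pd2 ψ x, - pd1 ψ x)) :
    ∃ p : ℝ × ℝ → ℝ, ContDiffOn ℝ (⊤ : ℕ∞) p Ω ∧
      (∀ x ∈ Ω,
        lap (fun y => (u y).1) x + lam * (u x).1 = pd1 p x ∧
        lap (fun y => (u y).2) x + lam * (u x).2 = pd2 p x) ∧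
      ∀ x ∈ Ω, lap p x = 0 :=
  stmt7_general Ω hΩ hsc lam ⊤ ψ hψ hbuck u hu
end

section
/- Let Ω ⊆ ℝ² be open and connected, let ν > 0 and λ ∈ ℝ, let ψ : ℝ² → ℝ be smooth on Ω, set u = (∂₂ψ, −∂₁ψ), assume Δu + λu = 0 on Ω (componentwise), and let c ∈ ℝ be such that Δψ + λψ = c on Ω. Define v(x,t) = e^{−νλt} u(x) and p(x,t) = −e^{−2νλt} ( |u(x)|²/2 + λψ(x)²/2 − c ψ(x) ). Then for every (x,t) ∈ Ω × (0,∞): ∂ₜv + (v·∇)v = ν Δₓv − ∇ₓp (componentwise) and divₓ v = ∂₁v₁ + ∂₂v₂ = 0. -/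
open MeasureTheory

/-- First spatial partial derivative of a time-dependent function on `(ℝ × ℝ) × ℝ`. -/
noncomputable def pdx1 (f : (ℝ × ℝ) × ℝ → ℝ) : (ℝ × ℝ) × ℝ → ℝ :=
  fun z => fderiv ℝ (fun y => f (y, z.2)) z.1 (1, 0)

/-- Second spatial partial derivative of a time-dependent function on `(ℝ × ℝ) × ℝ`. -/
noncomputable def pdx2 (f : (ℝ × ℝ) × ℝ → ℝ) : (ℝ × ℝ) × ℝ → ℝ :=
  fun z => fderiv ℝ (fun y => f (y, z.2)) z.1 (0, 1)

/-- Time derivative of a time-dependent function on `(ℝ × ℝ) × ℝ`. -/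
noncomputable def pdt (f : (ℝ × ℝ) × ℝ → ℝ) : (ℝ × ℝ) × ℝ → ℝ :=
  fun z => deriv (fun s => f (z.1, s)) z.2

/-- Spatial Laplacian of a time-dependent function on `(ℝ × ℝ) × ℝ`. -/
noncomputable def lapx (f : (ℝ × ℝ) × ℝ → ℝ) : (ℝ × ℝ) × ℝ → ℝ :=
  fun z => pdx1 (pdx1 f) z + pdx2 (pdx2 f) z

/-!
Write `T(t) = e^{-νλt}`, so that `v = T u` and `p = -T² q` with `q = |u|²/2 + λψ²/2 - cψ`.
Differentiating `Δψ + λψ = c` gives `Δu = -λu`, so `∂ₜv = νΔv`. What remains is the stationary Euler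
identity `(u·∇)u = ∇q`: for `u = (∂₂ψ, -∂₁ψ)` one has `(u·∇)u = ∇(|u|²/2) - Δψ ∇ψ`, and
`Δψ = c - λψ` turns `-Δψ ∇ψ` into `∇(λψ²/2 - cψ)`. Incompressibility is the symmetry
`∂₁∂₂ψ = ∂₂∂₁ψ`.
-/

open Filter Topology

section DirectionalDerivatives

variable {E F : Type*} [NormedAddCommGroup E] [NormedSpace ℝ E]
  [NormedAddCommGroup F] [NormedSpace ℝ F] {f : E → F} {x : E}

theorem contDiffAt_fderiv_apply {m n : WithTop ℕ∞} (hf : ContDiffAt ℝ n f x) (hmn : m + 1 ≤ n)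
    (e : E) : ContDiffAt ℝ m (fun y => fderiv ℝ f y e) x :=
  (hf.fderiv_right hmn).clm_apply contDiffAt_const

theorem differentiableAt_fderiv_apply (hf : ContDiffAt ℝ 2 f x) (e : E) :
    DifferentiableAt ℝ (fun y => fderiv ℝ f y e) x :=
  (contDiffAt_fderiv_apply hf one_add_one_eq_two.le e).differentiableAt one_ne_zero

theorem fderiv_fderiv_apply_comm (hf : ContDiffAt ℝ 2 f x) (d e : E) :
    fderiv ℝ (fun y => fderiv ℝ f y e) x d = fderiv ℝ (fun y => fderiv ℝ f y d) x e := by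
  have hf' : DifferentiableAt ℝ (fderiv ℝ f) x :=
    (hf.fderiv_right one_add_one_eq_two.le).differentiableAt one_ne_zero
  have second_derivative (a b : E) :
      fderiv ℝ (fun y => fderiv ℝ f y a) x b = fderiv ℝ (fderiv ℝ f) x b a := by
    simp [fderiv_clm_apply hf' (differentiableAt_const a)]
  rw [second_derivative, second_derivative]
  exact hf.isSymmSndFDerivAt (by simp) d e

theorem fderiv_fderiv_fderiv_apply_comm (hf : ContDiffAt ℝ 3 f x) (d e : E) :
    fderiv ℝ (fun y => fderiv ℝ (fun w => fderiv ℝ f w e) y d) x d =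
      fderiv ℝ (fun y => fderiv ℝ (fun w => fderiv ℝ f w d) y d) x e := by
  have inner_comm : (fun y => fderiv ℝ (fun w => fderiv ℝ f w e) y d) =ᶠ[𝓝 x]
      fun y => fderiv ℝ (fun w => fderiv ℝ f w d) y e := by
    filter_upwards [(hf.of_le (by norm_num : (2 : WithTop ℕ∞) ≤ 3)).eventually (by simp)] with y hy
    exact fderiv_fderiv_apply_comm hy d e
  rw [inner_comm.fderiv_eq]
  exact fderiv_fderiv_apply_comm (contDiffAt_fderiv_apply hf (by norm_num) d) d e

end DirectionalDerivatives

section Plane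

variable {f : ℝ × ℝ → ℝ} {x : ℝ × ℝ}

theorem pd1_neg (f : ℝ × ℝ → ℝ) : pd1 (fun y => -f y) = fun y => -pd1 f y := by
  funext x
  simp [pd1, fderiv_fun_neg]

theorem pd2_neg (f : ℝ × ℝ → ℝ) : pd2 (fun y => -f y) = fun y => -pd2 f y := by
  funext x
  simp [pd2, fderiv_fun_neg]

theorem pd1_pd2_comm (hf : ContDiffAt ℝ 2 f x) : pd1 (pd2 f) x = pd2 (pd1 f) x :=
  fderiv_fderiv_apply_comm hf (1, 0) (0, 1)

theorem lap_fderiv_apply (hf : ContDiffAt ℝ 3 f x) (e : ℝ × ℝ) :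
    lap (fun y => fderiv ℝ f y e) x = fderiv ℝ (lap f) x e := by
  have second_differentiable (d : ℝ × ℝ) :
      DifferentiableAt ℝ (fun y => fderiv ℝ (fun w => fderiv ℝ f w d) y d) x :=
    differentiableAt_fderiv_apply (contDiffAt_fderiv_apply hf (by norm_num) d) d
  calc lap (fun y => fderiv ℝ f y e) x
      = fderiv ℝ (pd1 (pd1 f)) x e + fderiv ℝ (pd2 (pd2 f)) x e :=
        congrArg₂ (· + ·) (fderiv_fderiv_fderiv_apply_comm hf (1, 0) e)
          (fderiv_fderiv_fderiv_apply_comm hf (0, 1) e)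
    _ = fderiv ℝ (lap f) x e :=
        (DFunLike.congr_fun
          (fderiv_fun_add (second_differentiable (1, 0)) (second_differentiable (0, 1))) e).symm

theorem lap_fderiv_apply_add_eq_zero {lam c : ℝ} (hf : ContDiffAt ℝ 3 f x)
    (hc : ∀ᶠ y in 𝓝 x, lap f y + lam * f y = c) (e : ℝ × ℝ) :
    lap (fun y => fderiv ℝ f y e) x + lam * fderiv ℝ f x e = 0 := by
  have lap_eq : lap f =ᶠ[𝓝 x] fun y => c - lam * f y :=
    hc.mono fun y hy => eq_sub_of_add_eq hy
  have hf' : DifferentiableAt ℝ f x := hf.differentiableAt three_ne_zero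
  rw [lap_fderiv_apply hf, lap_eq.fderiv_eq, fderiv_const_sub, fderiv_const_mul hf']
  simp

theorem lap_pd2_add_eq_zero {lam c : ℝ} (hf : ContDiffAt ℝ 3 f x)
    (hc : ∀ᶠ y in 𝓝 x, lap f y + lam * f y = c) :
    lap (pd2 f) x + lam * pd2 f x = 0 :=
  lap_fderiv_apply_add_eq_zero hf hc (0, 1)

theorem lap_neg_pd1_add_eq_zero {lam c : ℝ} (hf : ContDiffAt ℝ 3 f x)
    (hc : ∀ᶠ y in 𝓝 x, lap f y + lam * f y = c) :
    lap (fun y => -pd1 f y) x + lam * -pd1 f x = 0 := by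
  have h := lap_fderiv_apply_add_eq_zero hf hc (-(1, 0))
  simp only [map_neg] at h
  exact h

end Plane

section StationaryFlow

variable {ψ : ℝ × ℝ → ℝ} {x : ℝ × ℝ} {lam c : ℝ}

/-- The potential `q = |u|²/2 + λψ²/2 - cψ` of the convective term `(u·∇)u` for the velocity
`u = (∂₂ψ, -∂₁ψ)`. It is the stationary pressure with the opposite sign. -/
noncomputable def convectionPotential (lam c : ℝ) (ψ : ℝ × ℝ → ℝ) : ℝ × ℝ → ℝ :=
  fun x => (pd2 ψ x ^ 2 + (-pd1 ψ x) ^ 2) / 2 + lam * ψ x ^ 2 / 2 - c * ψ x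

theorem fderiv_convectionPotential_apply (hψ : ContDiffAt ℝ 2 ψ x) (e : ℝ × ℝ) :
    fderiv ℝ (convectionPotential lam c ψ) x e =
      pd2 ψ x * fderiv ℝ (pd2 ψ) x e + pd1 ψ x * fderiv ℝ (pd1 ψ) x e +
        (lam * ψ x - c) * fderiv ℝ ψ x e := by
  have dψ : HasFDerivAt ψ (fderiv ℝ ψ x) x := (hψ.differentiableAt two_ne_zero).hasFDerivAt
  have d₁ : HasFDerivAt (pd1 ψ) (fderiv ℝ (pd1 ψ) x) x :=
    (differentiableAt_fderiv_apply hψ (1, 0)).hasFDerivAt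
  have d₂ : HasFDerivAt (pd2 ψ) (fderiv ℝ (pd2 ψ) x) x :=
    (differentiableAt_fderiv_apply hψ (0, 1)).hasFDerivAt
  have dq : HasFDerivAt (convectionPotential lam c ψ) _ x :=
    ((((d₂.pow 2).add (d₁.neg.pow 2)).mul_const (2⁻¹ : ℝ)).add
      (((dψ.pow 2).const_mul lam).mul_const (2⁻¹ : ℝ))).sub (dψ.const_mul c)
  rw [dq.fderiv]
  simp only [Nat.add_one_sub_one, pow_one, nsmul_eq_mul, Nat.cast_ofNat, Pi.neg_apply, smul_neg,
    neg_smul, neg_neg, smul_add, sub_apply, add_apply, smul_apply, smul_eq_mul]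
  ring

theorem convection_fst_eq_pd1_convectionPotential (hψ : ContDiffAt ℝ 2 ψ x)
    (hc : lap ψ x + lam * ψ x = c) :
    pd2 ψ x * pd1 (pd2 ψ) x + -pd1 ψ x * pd2 (pd2 ψ) x =
      pd1 (convectionPotential lam c ψ) x := by
  have hq : pd1 (convectionPotential lam c ψ) x = pd2 ψ x * pd1 (pd2 ψ) x +
      pd1 ψ x * pd1 (pd1 ψ) x + (lam * ψ x - c) * pd1 ψ x :=
    fderiv_convectionPotential_apply hψ (1, 0)
  rw [lap] at hc
  linear_combination -hq - pd1 ψ x * hc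

theorem convection_snd_eq_pd2_convectionPotential (hψ : ContDiffAt ℝ 2 ψ x)
    (hc : lap ψ x + lam * ψ x = c) :
    pd2 ψ x * pd1 (fun y => -pd1 ψ y) x + -pd1 ψ x * pd2 (fun y => -pd1 ψ y) x =
      pd2 (convectionPotential lam c ψ) x := by
  have hq : pd2 (convectionPotential lam c ψ) x = pd2 ψ x * pd2 (pd2 ψ) x +
      pd1 ψ x * pd2 (pd1 ψ) x + (lam * ψ x - c) * pd2 ψ x :=
    fderiv_convectionPotential_apply hψ (0, 1)
  rw [lap] at hc
  rw [pd1_neg, pd2_neg]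
  linear_combination -hq - pd2 ψ x * hc

end StationaryFlow

section SeparatedFields

variable (T : ℝ → ℝ) (g : ℝ × ℝ → ℝ)

theorem pdx1_separated : pdx1 (fun w => T w.2 * g w.1) = fun w => T w.2 * pd1 g w.1 := by
  funext z
  exact DFunLike.congr_fun
    (congrFun (fderiv_const_smul_field (𝕜 := ℝ) (f := g) (T z.2)) z.1) (1, 0)

theorem pdx2_separated : pdx2 (fun w => T w.2 * g w.1) = fun w => T w.2 * pd2 g w.1 := by
  funext z
  exact DFunLike.congr_fun
    (congrFun (fderiv_const_smul_field (𝕜 := ℝ) (f := g) (T z.2)) z.1) (0, 1)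

theorem lapx_separated (z : (ℝ × ℝ) × ℝ) :
    lapx (fun w => T w.2 * g w.1) z = T z.2 * lap g z.1 := by
  simp only [lapx, lap, pdx1_separated, pdx2_separated]
  ring

theorem pdt_separated (z : (ℝ × ℝ) × ℝ) :
    pdt (fun w => T w.2 * g w.1) z = deriv T z.2 * g z.1 :=
  deriv_mul_const_field (u := T) (g z.1)

variable {T g}

theorem material_derivative_separated {ν lam : ℝ} {z : (ℝ × ℝ) × ℝ}
    (hT : deriv T z.2 = -(ν * lam) * T z.2) (hg : lap g z.1 + lam * g z.1 = 0) (a b : ℝ) :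
    pdt (fun w => T w.2 * g w.1) z +
        (T z.2 * a * pdx1 (fun w => T w.2 * g w.1) z +
          T z.2 * b * pdx2 (fun w => T w.2 * g w.1) z) =
      ν * lapx (fun w => T w.2 * g w.1) z + T z.2 ^ 2 * (a * pd1 g z.1 + b * pd2 g z.1) := by
  rw [pdt_separated, lapx_separated, pdx1_separated, pdx2_separated, hT]
  linear_combination -ν * T z.2 * hg

theorem divergence_separated_eq_zero {ψ : ℝ × ℝ → ℝ} {z : (ℝ × ℝ) × ℝ}
    (hψ : ContDiffAt ℝ 2 ψ z.1) :
    pdx1 (fun w => T w.2 * pd2 ψ w.1) z + pdx2 (fun w => T w.2 * -pd1 ψ w.1) z = 0 := by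
  rw [pdx1_separated, pdx2_separated T fun y => -pd1 ψ y, pd2_neg]
  linear_combination T z.2 * pd1_pd2_comm hψ

end SeparatedFields

theorem deriv_exp_neg_mul (k t : ℝ) :
    deriv (fun s => Real.exp (-(k * s))) t = -k * Real.exp (-(k * t)) := by
  have h := ((hasDerivAt_id' t).const_mul k).neg.exp
  rw [mul_one, mul_comm] at h
  exact h.deriv

theorem stmt12_general (Ω : Set (ℝ × ℝ)) (hΩ : IsOpen Ω) (ν lam : ℝ)
    (ψ : ℝ × ℝ → ℝ) (hψ : ContDiffOn ℝ 3 ψ Ω)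
    (u : ℝ × ℝ → ℝ × ℝ) (hu : u = fun x => (pd2 ψ x, -pd1 ψ x))
    (c : ℝ) (hc : ∀ x ∈ Ω, lap ψ x + lam * ψ x = c)
    (v : (ℝ × ℝ) × ℝ → ℝ × ℝ)
    (hv : v = fun z => Real.exp (-(ν * lam * z.2)) • u z.1)
    (p : (ℝ × ℝ) × ℝ → ℝ)
    (hp : p = fun z => -Real.exp (-(2 * ν * lam * z.2)) *
      (((u z.1).1 ^ 2 + (u z.1).2 ^ 2) / 2 + lam * (ψ z.1) ^ 2 / 2 - c * ψ z.1)) :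
    ∀ z ∈ Ω ×ˢ (Set.univ : Set ℝ),
      (pdt (fun w => (v w).1) z +
          ((v z).1 * pdx1 (fun w => (v w).1) z + (v z).2 * pdx2 (fun w => (v w).1) z) =
        ν * lapx (fun w => (v w).1) z - pdx1 p z) ∧
      (pdt (fun w => (v w).2) z +
          ((v z).1 * pdx1 (fun w => (v w).2) z + (v z).2 * pdx2 (fun w => (v w).2) z) =
        ν * lapx (fun w => (v w).2) z - pdx2 p z) ∧
      pdx1 (fun w => (v w).1) z + pdx2 (fun w => (v w).2) z = 0 := by
  rintro z ⟨hx, -⟩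
  have hψ3 : ContDiffAt ℝ 3 ψ z.1 := hψ.contDiffAt (hΩ.mem_nhds hx)
  have hψ2 : ContDiffAt ℝ 2 ψ z.1 := hψ3.of_le (by norm_num)
  have hcx : ∀ᶠ y in 𝓝 z.1, lap ψ y + lam * ψ y = c := eventually_of_mem (hΩ.mem_nhds hx) hc
  let T : ℝ → ℝ := fun t => Real.exp (-(ν * lam * t))
  have hT : deriv T z.2 = -(ν * lam) * T z.2 := deriv_exp_neg_mul _ _
  have hv₁ : (fun w => (v w).1) = fun w => T w.2 * pd2 ψ w.1 := by rw [hv, hu]; rfl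
  have hv₂ : (fun w => (v w).2) = fun w => T w.2 * -pd1 ψ w.1 := by rw [hv, hu]; rfl
  have hp' : p = fun w => -T w.2 ^ 2 * convectionPotential lam c ψ w.1 := by
    funext w
    have hT2 : Real.exp (-(2 * ν * lam * w.2)) = T w.2 ^ 2 := by
      rw [← Real.exp_nat_mul]
      ring_nf
    simp only [hp, hu, hT2, convectionPotential]
  rw [congrFun hv₁ z, congrFun hv₂ z, hv₁, hv₂, hp']
  refine ⟨?_, ?_, ?_⟩
  · rw [material_derivative_separated hT (lap_pd2_add_eq_zero hψ3 hcx),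
      convection_fst_eq_pd1_convectionPotential hψ2 (hc _ hx), pdx1_separated (fun t => -T t ^ 2)]
    ring
  · rw [material_derivative_separated hT (lap_neg_pd1_add_eq_zero hψ3 hcx),
      convection_snd_eq_pd2_convectionPotential hψ2 (hc _ hx), pdx2_separated (fun t => -T t ^ 2)]
    ring
  · exact divergence_separated_eq_zero hψ2

theorem stmt12 (Ω : Set (ℝ × ℝ)) (hΩ : IsOpen Ω) (hconn : IsConnected Ω)
    (ν lam : ℝ) (hν : 0 < ν)
    (ψ : ℝ × ℝ → ℝ) (hψ : ContDiffOn ℝ (⊤ : ℕ∞) ψ Ω)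
    (u : ℝ × ℝ → ℝ × ℝ) (hu : u = fun x => (pd2 ψ x, - pd1 ψ x))
    (heq : ∀ x ∈ Ω,
      lap (fun y => (u y).1) x + lam * (u x).1 = 0 ∧
      lap (fun y => (u y).2) x + lam * (u x).2 = 0)
    (c : ℝ) (hc : ∀ x ∈ Ω, lap ψ x + lam * ψ x = c)
    (v : (ℝ × ℝ) × ℝ → ℝ × ℝ)
    (hv : v = fun z => Real.exp (-(ν * lam * z.2)) • u z.1)
    (p : (ℝ × ℝ) × ℝ → ℝ)
    (hp : p = fun z => - Real.exp (-(2 * ν * lam * z.2)) *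
      (((u z.1).1 ^ 2 + (u z.1).2 ^ 2) / 2 + lam * (ψ z.1) ^ 2 / 2 - c * ψ z.1)) :
    ∀ z ∈ Ω ×ˢ Set.Ioi (0 : ℝ),
      (pdt (fun w => (v w).1) z +
          ((v z).1 * pdx1 (fun w => (v w).1) z + (v z).2 * pdx2 (fun w => (v w).1) z) =
        ν * lapx (fun w => (v w).1) z - pdx1 p z) ∧
      (pdt (fun w => (v w).2) z +
          ((v z).1 * pdx1 (fun w => (v w).2) z + (v z).2 * pdx2 (fun w => (v w).2) z) =
        ν * lapx (fun w => (v w).2) z - pdx2 p z) ∧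
      pdx1 (fun w => (v w).1) z + pdx2 (fun w => (v w).2) z = 0 :=
  fun z hz => stmt12_general Ω hΩ ν lam ψ (hψ.of_le (WithTop.coe_le_coe.2 le_top)) u hu c hc v hv
    p hp z ⟨hz.1, Set.mem_univ z.2⟩
end
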